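/- Let A_h be a symmetric positive-definite operator on a finite-dimensional inner product space V_h, S_h a symmetric positive-definite smoother with ρ(A_h)^{-1}(v,v) ≲ (S_h v, v) ≲ ρ(A_h)^{-1}(v,v), B₀ a symmetric positive-definite coarse solver on V₀ with (A₀w,w) ≲ (B₀A₀w, A₀w) ≲ (A₀w,w), and Π: V₀ → V_h with ‖Πw‖_{A_h} ≲ ‖w‖_{A₀}. Suppose there exists a linear operator P: V_h → V₀ with ‖Pv‖_{A₀} ≲ ‖v‖_{A_h} and ‖v − ΠPv‖² ≲ ρ(A_h)^{-1}‖v‖²_{A_h}. Then the preconditioner B_h = S_h + Π B₀ Πᵀ satisfies κ(B_h A_h) ≲ 1, i.e., the condition number of B_h A_h is bounded by a constant independent of the mesh size. -/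

import Mathlib

open scoped RealInnerProductSpace

theorem aux_cs {V : Type} [NormedAddCommGroup V] [InnerProductSpace ℝ V]
    (A : V →ₗ[ℝ] V) (hs : ∀ u v : V, ⟪A u, v⟫ = ⟪u, A v⟫)
    (hp : ∀ v : V, v ≠ 0 → 0 < ⟪A v, v⟫) (u v : V) :
    0 ≤ ⟪A u, u⟫ ∧ ⟪A u, v⟫ ^ 2 ≤ ⟪A u, u⟫ * ⟪A v, v⟫ := by
  have hn : ∀ x : V, 0 ≤ ⟪A x, x⟫ := by
    intro x
    by_cases hx : x = 0
    · simp [hx]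
    · exact (hp x hx).le
  refine ⟨hn u, ?_⟩
  have h : ∀ x : ℝ, 0 ≤ ⟪A v, v⟫ * (x * x) + (2 * ⟪A u, v⟫) * x + ⟪A u, u⟫ := by
    intro x
    have h1 := hn (u + x • v)
    have h2 : ⟪A v, u⟫ = ⟪A u, v⟫ := by rw [hs, real_inner_comm]
    simp only [map_add, map_smul, inner_add_left, inner_add_right, real_inner_smul_left,
      real_inner_smul_right, h2] at h1
    linarith
  have := discrim_le_zero h
  unfold discrim at this
  nlinarith

theorem aux_cancel {t c : ℝ} (ht : 0 ≤ t) (hc : 0 ≤ c) (h : t ^ 2 ≤ c * t) : t ≤ c := by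
  rcases ht.eq_or_lt with h0 | h0
  · linarith
  · nlinarith

/-- Auxiliary space preconditioning theorem: for any fixed constants in the
hypotheses (smoother equivalence, coarse solver equivalence, energy stability
of the prolongation `Π`, stability and approximation of the auxiliary operator
`P`), there is a constant `C` such that for every instance of the setting
(in particular independent of the mesh size / dimension of the spaces), the
preconditioned operator `B_h A_h` with `B_h = S_h + Π B₀ Πᵀ` has all its
generalized Rayleigh quotients between `λ₀` and `λ₁ ≤ C λ₀`, i.e.
`κ(B_h A_h) ≤ C`. -/
theorem auxiliary_space_preconditioner_condition_number
    (cS1 cS2 cB1 cB2 cPi cP cE : ℝ)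
    (hcS1 : 0 < cS1) (hcS2 : 0 < cS2) (hcB1 : 0 < cB1) (hcB2 : 0 < cB2)
    (hcPi : 0 < cPi) (hcP : 0 < cP) (hcE : 0 < cE) :
    ∃ C : ℝ, 0 < C ∧
      ∀ (Vh V0 : Type)
        [NormedAddCommGroup Vh] [InnerProductSpace ℝ Vh] [FiniteDimensional ℝ Vh]
        [NormedAddCommGroup V0] [InnerProductSpace ℝ V0] [FiniteDimensional ℝ V0]
        (Ah Sh : Vh →ₗ[ℝ] Vh) (A0 B0 : V0 →ₗ[ℝ] V0)
        (Pi : V0 →ₗ[ℝ] Vh) (P : Vh →ₗ[ℝ] V0) (ρ : ℝ),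
        (∀ u v : Vh, ⟪Ah u, v⟫ = ⟪u, Ah v⟫) →
        (∀ v : Vh, v ≠ 0 → 0 < ⟪Ah v, v⟫) →
        (∀ u v : Vh, ⟪Sh u, v⟫ = ⟪u, Sh v⟫) →
        (∀ u v : V0, ⟪A0 u, v⟫ = ⟪u, A0 v⟫) →
        (∀ w : V0, w ≠ 0 → 0 < ⟪A0 w, w⟫) →
        (∀ u v : V0, ⟪B0 u, v⟫ = ⟪u, B0 v⟫) →
        0 < ρ →
        -- ρ is (an upper bound for) the spectral radius of A_h
        (∀ v : Vh, ⟪Ah v, v⟫ ≤ ρ * ‖v‖ ^ 2) →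
        -- smoother spectral equivalence: ρ(A_h)⁻¹ (v,v) ≲ (S_h v, v) ≲ ρ(A_h)⁻¹ (v,v)
        (∀ v : Vh, cS1 * ρ⁻¹ * ‖v‖ ^ 2 ≤ ⟪Sh v, v⟫ ∧ ⟪Sh v, v⟫ ≤ cS2 * ρ⁻¹ * ‖v‖ ^ 2) →
        -- coarse solver equivalence: (A₀w,w) ≲ (B₀A₀w, A₀w) ≲ (A₀w,w)
        (∀ w : V0, cB1 * ⟪A0 w, w⟫ ≤ ⟪B0 (A0 w), A0 w⟫ ∧
          ⟪B0 (A0 w), A0 w⟫ ≤ cB2 * ⟪A0 w, w⟫) →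
        -- energy stability of Π: ‖Πw‖_{A_h} ≲ ‖w‖_{A₀}
        (∀ w : V0, ⟪Ah (Pi w), Pi w⟫ ≤ cPi ^ 2 * ⟪A0 w, w⟫) →
        -- stability of P: ‖Pv‖_{A₀} ≲ ‖v‖_{A_h}
        (∀ v : Vh, ⟪A0 (P v), P v⟫ ≤ cP ^ 2 * ⟪Ah v, v⟫) →
        -- approximation: ‖v − ΠPv‖² ≲ ρ(A_h)⁻¹ ‖v‖²_{A_h}
        (∀ v : Vh, ‖v - Pi (P v)‖ ^ 2 ≤ cE * ρ⁻¹ * ⟪Ah v, v⟫) →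
        ∃ lam0 lam1 : ℝ, 0 < lam0 ∧ lam1 ≤ C * lam0 ∧
          ∀ v : Vh,
            lam0 * ⟪Ah v, v⟫ ≤
              ⟪Ah ((Sh + Pi ∘ₗ B0 ∘ₗ LinearMap.adjoint Pi) (Ah v)), v⟫ ∧
            ⟪Ah ((Sh + Pi ∘ₗ B0 ∘ₗ LinearMap.adjoint Pi) (Ah v)), v⟫ ≤
              lam1 * ⟪Ah v, v⟫ := by
  have hK : 0 < cE / cS1 + cP ^ 2 / cB1 := by positivity
  refine ⟨(cS2 + cB2 * cPi ^ 2) * (2 * (cE / cS1 + cP ^ 2 / cB1)), by positivity, ?_⟩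
  intro Vh V0 _ _ _ _ _ _ Ah Sh A0 B0 Pi P ρ hAs hAp hSs h0s h0p hBs hρ hρA hS hB hPi hP hE
  refine ⟨1 / (2 * (cE / cS1 + cP ^ 2 / cB1)), cS2 + cB2 * cPi ^ 2, by positivity, ?_, ?_⟩
  · apply le_of_eq
    rw [mul_assoc, mul_one_div_cancel (by positivity), mul_one]
  intro v
  have hinj : Function.Injective A0 := by
    rw [injective_iff_map_eq_zero]
    intro x hx
    by_contra hne
    have := h0p x hne
    simp [hx] at this
  obtain ⟨w, hw⟩ := (LinearMap.injective_iff_surjective.mp hinj) (LinearMap.adjoint Pi (Ah v))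
  have hadj' : ∀ z : V0, ⟪Pi z, Ah v⟫ = ⟪z, A0 w⟫ := by
    intro z
    rw [hw, LinearMap.adjoint_inner_right]
  have hQ : ⟪Ah ((Sh + Pi ∘ₗ B0 ∘ₗ LinearMap.adjoint Pi) (Ah v)), v⟫
      = ⟪Sh (Ah v), Ah v⟫ + ⟪B0 (A0 w), A0 w⟫ := by
    rw [hAs, LinearMap.add_apply, inner_add_left, LinearMap.comp_apply, LinearMap.comp_apply,
      ← hw, hadj']
  have hadj : ∀ z : V0, ⟪A0 w, z⟫ = ⟪Ah v, Pi z⟫ := by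
    intro z
    rw [hw, LinearMap.adjoint_inner_left]
  rw [hQ]
  obtain ⟨hS1, hS2⟩ := hS (Ah v)
  obtain ⟨hB1, hB2⟩ := hB w
  obtain ⟨ha, hc1⟩ := aux_cs Ah hAs hAp v (Ah v)
  obtain ⟨-, hc2⟩ := aux_cs Ah hAs hAp v (Pi w)
  obtain ⟨ht, hc3⟩ := aux_cs A0 h0s h0p w (P v)
  rw [← hadj] at hc2
  have hPiw := hPi w
  have hPv := hP v
  have hEv := hE v
  have hρA' := hρA (Ah v)
  rw [real_inner_self_eq_norm_sq] at hc1
  have hcs : ⟪Ah v, v - Pi (P v)⟫ ^ 2 ≤ ‖Ah v‖ ^ 2 * ‖v - Pi (P v)‖ ^ 2 := by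
    rw [← mul_pow, ← sq_abs]
    exact pow_le_pow_left₀ (abs_nonneg _) (abs_real_inner_le_norm _ _) 2
  have hsplit : ⟪Ah v, v⟫ = ⟪Ah v, v - Pi (P v)⟫ + ⟪A0 w, P v⟫ := by
    rw [hadj, inner_sub_right]; ring
  have hn2 : 0 ≤ ‖Ah v‖ ^ 2 := by positivity
  generalize ⟪Ah v, v - Pi (P v)⟫ = p at *
  generalize ⟪A0 w, P v⟫ = q at *
  generalize ⟪Ah v, v⟫ = a at *
  generalize ⟪A0 w, w⟫ = t at *
  generalize ⟪Sh (Ah v), Ah v⟫ = S at *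
  generalize ⟪B0 (A0 w), A0 w⟫ = B at *
  generalize ‖Ah v‖ ^ 2 = n at *
  have hn : n ≤ a * ρ := by
    apply aux_cancel hn2 (by positivity)
    linarith [mul_le_mul_of_nonneg_left hρA' ha]
  have hta : t ≤ a * cPi ^ 2 := by
    apply aux_cancel ht (by positivity)
    linarith [mul_le_mul_of_nonneg_left hPiw ha]
  have hs0 : 0 ≤ ρ⁻¹ * n := by positivity
  have hsa : ρ⁻¹ * n ≤ a := by
    rw [inv_mul_le_iff₀ hρ]; linarith
  have hp2 : p ^ 2 ≤ cE * (ρ⁻¹ * n) * a := by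
    linarith [mul_le_mul_of_nonneg_left hEv hn2]
  have hq2 : q ^ 2 ≤ cP ^ 2 * t * a := by
    linarith [mul_le_mul_of_nonneg_left hPv ht]
  rw [mul_assoc] at hS1 hS2
  generalize ρ⁻¹ * n = s at *
  constructor
  · have h1 : a ≤ 2 * (cE * s + cP ^ 2 * t) := by
      apply aux_cancel ha (by positivity)
      have : a ^ 2 = (p + q) ^ 2 := by rw [hsplit]
      linarith [sq_nonneg (p - q)]
    have hS0 : 0 ≤ S := le_trans (by positivity) hS1
    have hB0 : 0 ≤ B := le_trans (by positivity) hB1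
    have h2 : cE * s ≤ cE / cS1 * S := by
      rw [div_mul_eq_mul_div, le_div_iff₀ hcS1]
      linarith [mul_le_mul_of_nonneg_left hS1 hcE.le]
    have h3 : cP ^ 2 * t ≤ cP ^ 2 / cB1 * B := by
      rw [div_mul_eq_mul_div, le_div_iff₀ hcB1]
      linarith [mul_le_mul_of_nonneg_left hB1 (sq_nonneg cP)]
    have h4 : 0 ≤ cE / cS1 * B := by positivity
    have h5 : 0 ≤ cP ^ 2 / cB1 * S := by positivity
    rw [one_div, inv_mul_le_iff₀ (by positivity)]
    linarith
  · linarith [mul_le_mul_of_nonneg_left hsa hcS2.le, mul_le_mul_of_nonneg_left hta hcB2.le]
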